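/- arXiv:2511.02422 — 2 statements merged into one kernel-verified Lean document; each statement's English description precedes it below -/
import Mathlib

section
/- Let m₀ be a positive integer and let p₁, …, p_{m₀} be independent random variables on a probability space, each uniformly distributed on [0,1]. Let p_{(1)} ≤ … ≤ p_{(m₀)} denote their order statistics. Then for every α ∈ [0,1], ℙ(∃ k ∈ {1,…,m₀} : p_{(k)} ≤ α k / m₀) = α. -/
open MeasureTheory

/-- The `k`-th smallest value (1-based) among `(p i)_{i ∈ A}`. -/
noncomputable def orderStat {m : ℕ} (p : Fin m → ℝ) (A : Finset (Fin m)) (k : ℕ) : ℝ :=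
  ((A.val.map p).sort (· ≤ ·)).getD (k - 1) 0

/-! Call `R` the number of rejections of the step-up procedure with critical values `τ`, the
largest `k` such that at least `k` of the `Xᵢ` lie below `τ k`; the Simes event is `R ≥ 1`.
Exactly `k` of the `Xᵢ` are at most `τ k` on `{R = k}`, so `k ℙ(R = k) = ∑ᵢ ℙ(Xᵢ ≤ τ k, R = k)`.
If `Xᵢ ≤ τ k`, lowering `Xᵢ` further does not change whether `R = k`, so `R` may be replaced by the
count `Rᵢ` computed with `Xᵢ` lowered to `τ 0`. As `Rᵢ` is independent of `Xᵢ`, and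
`ℙ(Xᵢ ≤ τ k) = k c`, this gives `ℙ(R = k) = c ∑ᵢ ℙ(Rᵢ = k)`; now sum over `k`, using that `Rᵢ ≥ 1`
always. -/

open ProbabilityTheory Finset
open scoped ENNReal

theorem orderStat_le_iff {m : ℕ} {p : Fin m → ℝ} {A : Finset (Fin m)} {k : ℕ} {t : ℝ}
    (hk : 1 ≤ k) (hkA : k ≤ #A) : orderStat p A k ≤ t ↔ k ≤ #{i ∈ A | p i ≤ t} := by
  set l := (A.val.map p).sort (· ≤ ·) with hl
  have hlen : k - 1 < l.length := by
    rw [hl, Multiset.length_sort, Multiset.card_map, card_val]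
    lia
  have hmono : Monotone l.get := (Multiset.pairwise_sort _ _).sortedLE.monotone_get
  have hcount : #{j | l.get j ≤ t} = #{i ∈ A | p i ≤ t} := by
    have hmap : univ.val.map l.get = A.val.map p := by
      rw [Fin.univ_val_map, List.ofFn_get, hl, Multiset.sort_eq]
    have h := congrArg (Multiset.countP (· ≤ t)) hmap
    rw [Multiset.countP_map, Multiset.countP_map] at h
    exact h
  calc orderStat p A k ≤ t
    _ ↔ l.get ⟨k - 1, hlen⟩ ≤ t := by
      rw [orderStat, List.getD_eq_getElem _ _ hlen, List.get_eq_getElem]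
    _ ↔ k - 1 < #{j | l.get j ≤ t} := (Tuple.lt_card_le_iff_apply_le_of_monotone hmono).symm
    _ ↔ k ≤ #{i ∈ A | p i ≤ t} := by rw [hcount]; lia

section StepUp

variable {ι E : Type*} [Fintype ι] [LinearOrder E] {τ : ℕ → E} {x : ι → E} {k : ℕ}

/-- The number of rejections of the step-up multiple testing procedure with critical values
`τ 1 ≤ τ 2 ≤ ⋯` applied to the `p`-values `x`: the largest `k` such that at least `k` of the `x i`
are at most `τ k`. The value `τ 0` is immaterial, as `k = 0` always qualifies. -/
def stepUpCount (τ : ℕ → E) (x : ι → E) : ℕ :=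
  Nat.findGreatest (fun k ↦ k ≤ #{i | x i ≤ τ k}) (Fintype.card ι)

theorem stepUpCount_le_card : stepUpCount τ x ≤ Fintype.card ι :=
  Nat.findGreatest_le _

theorem le_stepUpCount (h : k ≤ #{i | x i ≤ τ k}) : k ≤ stepUpCount τ x :=
  Nat.le_findGreatest (h.trans (card_le_univ _)) h

theorem stepUpCount_le_card_filter : stepUpCount τ x ≤ #{i | x i ≤ τ (stepUpCount τ x)} :=
  Nat.findGreatest_spec (P := fun k ↦ k ≤ #{i | x i ≤ τ k}) (Nat.zero_le _) (Nat.zero_le _)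

theorem card_filter_le_stepUpCount_eq (hτ : Monotone τ) :
    #{i | x i ≤ τ (stepUpCount τ x)} = stepUpCount τ x := by
  refine le_antisymm (le_stepUpCount ?_) stepUpCount_le_card_filter
  gcongr
  exact hτ stepUpCount_le_card_filter

theorem one_le_stepUpCount_iff :
    1 ≤ stepUpCount τ x ↔ ∃ k ∈ Icc 1 (Fintype.card ι), k ≤ #{i | x i ≤ τ k} := by
  constructor
  · intro h
    exact ⟨_, mem_Icc.2 ⟨h, stepUpCount_le_card⟩, stepUpCount_le_card_filter⟩
  · rintro ⟨k, hk, h⟩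
    exact (mem_Icc.1 hk).1.trans (le_stepUpCount h)

variable [DecidableEq ι] {i : ι}

theorem stepUpCount_le_stepUpCount_update (hτ : Monotone τ) :
    stepUpCount τ x ≤ stepUpCount τ (Function.update x i (τ 0)) := by
  refine le_stepUpCount (stepUpCount_le_card_filter.trans (card_le_card ?_))
  refine monotone_filter_right _ fun j _ ↦ ?_
  rcases eq_or_ne j i with rfl | hj
  · simpa only [Function.update_self] using fun _ ↦ hτ (Nat.zero_le _)
  · rw [Function.update_of_ne hj]
    exact id

theorem stepUpCount_update_le_stepUpCount
    (h : x i ≤ τ (stepUpCount τ (Function.update x i (τ 0)))) :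
    stepUpCount τ (Function.update x i (τ 0)) ≤ stepUpCount τ x := by
  refine le_stepUpCount (stepUpCount_le_card_filter.trans (card_le_card ?_))
  refine monotone_filter_right _ fun j _ ↦ ?_
  rcases eq_or_ne j i with rfl | hj
  · exact fun _ ↦ h
  · rw [Function.update_of_ne hj]
    exact id

theorem stepUpCount_update_eq_iff (hτ : Monotone τ) (h : x i ≤ τ k) :
    stepUpCount τ (Function.update x i (τ 0)) = k ↔ stepUpCount τ x = k := by
  have hle := stepUpCount_le_stepUpCount_update (x := x) (i := i) hτ
  have hge (hk : k ≤ stepUpCount τ (Function.update x i (τ 0))) :=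
    stepUpCount_update_le_stepUpCount (h.trans (hτ hk))
  lia

theorem one_le_stepUpCount_update (hτ : Monotone τ) :
    1 ≤ stepUpCount τ (Function.update x i (τ 0)) := by
  refine le_stepUpCount (card_pos.2 ⟨i, ?_⟩)
  simpa only [mem_filter_univ, Function.update_self] using hτ zero_le_one

end StepUp

section Probability

variable {Ω ι E : Type*} [MeasurableSpace Ω] {μ : Measure Ω} [MeasurableSpace E]

theorem natCast_mul_measure_eq_sum_measure_inter [Fintype ι] {A : ι → Set Ω}
    [∀ ω, DecidablePred fun i ↦ ω ∈ A i] {S : Set Ω} {k : ℕ}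
    (hA : ∀ i, NullMeasurableSet (A i) μ) (hS : NullMeasurableSet S μ)
    (hk : ∀ ω ∈ S, #{i | ω ∈ A i} = k) : k * μ S = ∑ i, μ (A i ∩ S) := by
  have hA' (i) : NullMeasurableSet (A i) (μ.restrict S) := (hA i).mono Measure.restrict_le_self
  calc k * μ S
    _ = ∫⁻ _ in S, k ∂μ := (setLIntegral_const S _).symm
    _ = ∫⁻ ω in S, ∑ i, (A i).indicator 1 ω ∂μ := by
      refine lintegral_congr_ae ((ae_restrict_mem₀ hS).mono fun ω hω ↦ ?_)
      simp only [Set.indicator_apply, Pi.one_apply, sum_boole, hk ω hω]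
    _ = ∑ i, ∫⁻ ω in S, (A i).indicator 1 ω ∂μ :=
      lintegral_finsetSum' _ fun i _ ↦ aemeasurable_one.indicator₀ (hA' i)
    _ = ∑ i, μ (A i ∩ S) := by
      simp only [lintegral_indicator_one₀ (hA' _), Measure.restrict_apply₀ (hA' _)]

theorem sum_measure_preimage_singleton_of_aemeasurable [MeasurableSingletonClass E]
    {f : Ω → E} (hf : AEMeasurable f μ) (s : Finset E) :
    ∑ y ∈ s, μ (f ⁻¹' {y}) = μ (f ⁻¹' s) := by
  simp only [← Measure.map_apply_of_aemeasurable hf, measurableSet_singleton,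
    s.measurableSet, sum_measure_singleton]

theorem indepFun_update_of_iIndepFun [Finite ι] [DecidableEq ι] {X : ι → Ω → E}
    (hindep : iIndepFun X μ) (hX : ∀ i, AEMeasurable (X i) μ) (i : ι) (a : E) :
    IndepFun (X i) (fun ω ↦ Function.update (X · ω) i a) μ := by
  have := Fintype.ofFinite ι
  have h := hindep.indepFun_finset₀ {i} {i}ᶜ disjoint_compl_right hX
  have hupdate (ω) : Function.updateFinset (fun _ ↦ a) {i}ᶜ (fun j ↦ X j ω) =
      Function.update (X · ω) i a := by
    ext j
    by_cases hj : j = i <;> simp [Function.updateFinset, hj]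
  have hmeas : Measurable (Function.updateFinset (fun _ : ι ↦ a) {i}ᶜ) := measurable_updateFinset
  simpa only [Function.comp_def, hupdate] using
    h.comp (measurable_pi_apply ⟨i, mem_singleton_self i⟩) hmeas

variable [LinearOrder E] [TopologicalSpace E] [ClosedIicTopology E] [OpensMeasurableSpace E]
  [Fintype ι] {τ : ℕ → E} {X : ι → Ω → E}

theorem measurable_stepUpCount (τ : ℕ → E) : Measurable (stepUpCount τ : (ι → E) → ℕ) := by
  refine measurable_findGreatest fun k _ ↦ measurableSet_le measurable_const ?_
  simp only [card_filter]
  exact Finset.measurable_sum _ fun i _ ↦ Measurable.ite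
    (measurableSet_Iic.preimage (measurable_pi_apply i)) measurable_const measurable_const

theorem aemeasurable_stepUpCount (hX : ∀ i, AEMeasurable (X i) μ) :
    AEMeasurable (fun ω ↦ stepUpCount τ (X · ω)) μ :=
  (measurable_stepUpCount τ).comp_aemeasurable (aemeasurable_pi_lambda _ hX)

theorem aemeasurable_stepUpCount_update [DecidableEq ι] (hX : ∀ i, AEMeasurable (X i) μ) (i : ι)
    (a : E) : AEMeasurable (fun ω ↦ stepUpCount τ (Function.update (X · ω) i a)) μ :=
  ((measurable_stepUpCount τ).comp measurable_update_left).comp_aemeasurable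
    (aemeasurable_pi_lambda _ hX)

theorem natCast_mul_measure_stepUpCount_eq [DecidableEq ι] (hindep : iIndepFun X μ)
    (hX : ∀ i, AEMeasurable (X i) μ) (hτ : Monotone τ) (k : ℕ) :
    k * μ {ω | stepUpCount τ (X · ω) = k} = ∑ i, μ {ω | X i ω ≤ τ k} *
      μ {ω | stepUpCount τ (Function.update (X · ω) i (τ 0)) = k} := by
  have hA (i) : NullMeasurableSet {ω | X i ω ≤ τ k} μ :=
    (hX i).nullMeasurableSet_preimage measurableSet_Iic
  have hS : NullMeasurableSet {ω | stepUpCount τ (X · ω) = k} μ :=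
    (aemeasurable_stepUpCount hX).nullMeasurableSet_preimage (measurableSet_singleton k)
  have hcard (ω) (hω : stepUpCount τ (X · ω) = k) : #{i | X i ω ≤ τ k} = k := by
    subst hω
    exact card_filter_le_stepUpCount_eq hτ
  rw [natCast_mul_measure_eq_sum_measure_inter hA hS hcard]
  refine sum_congr rfl fun i _ ↦ ?_
  calc μ ({ω | X i ω ≤ τ k} ∩ {ω | stepUpCount τ (X · ω) = k})
    _ = μ ({ω | X i ω ≤ τ k} ∩ {ω | stepUpCount τ (Function.update (X · ω) i (τ 0)) = k}) := by
      congr 1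
      ext ω
      exact and_congr_right fun h ↦ (stepUpCount_update_eq_iff (i := i) hτ h).symm
    _ = _ := ((indepFun_update_of_iIndepFun hindep hX i (τ 0)).comp measurable_id
        (measurable_stepUpCount τ)).measure_inter_preimage_eq_mul
          _ _ measurableSet_Iic (measurableSet_singleton k)

theorem sum_measure_stepUpCount_update_eq_one [DecidableEq ι] [IsProbabilityMeasure μ]
    (hX : ∀ i, AEMeasurable (X i) μ) (hτ : Monotone τ) (i : ι) :
    ∑ k ∈ Icc 1 (Fintype.card ι),
      μ {ω | stepUpCount τ (Function.update (X · ω) i (τ 0)) = k} = 1 := by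
  have hrange (ω) : stepUpCount τ (Function.update (X · ω) i (τ 0)) ∈ Icc 1 (Fintype.card ι) :=
    mem_Icc.2 ⟨one_le_stepUpCount_update hτ, stepUpCount_le_card⟩
  refine (sum_measure_preimage_singleton_of_aemeasurable
    (aemeasurable_stepUpCount_update hX i (τ 0)) _).trans ?_
  rw [Set.preimage_eq_univ_iff.2 (Set.range_subset_iff.2 hrange), measure_univ]

theorem measure_one_le_stepUpCount (hindep : iIndepFun X μ) (hX : ∀ i, AEMeasurable (X i) μ)
    (hτ : Monotone τ) {c : ℝ≥0∞}
    (hc : ∀ i, ∀ k ∈ Icc 1 (Fintype.card ι), μ {ω | X i ω ≤ τ k} = k * c) :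
    μ {ω | 1 ≤ stepUpCount τ (X · ω)} = Fintype.card ι * c := by
  classical
  have := hindep.isProbabilityMeasure
  have hfiber : ∀ k ∈ Icc 1 (Fintype.card ι), μ {ω | stepUpCount τ (X · ω) = k} =
      ∑ i, c * μ {ω | stepUpCount τ (Function.update (X · ω) i (τ 0)) = k} := by
    intro k hk
    have hk0 : (k : ℝ≥0∞) ≠ 0 := Nat.cast_ne_zero.2 (Nat.one_le_iff_ne_zero.1 (mem_Icc.1 hk).1)
    rw [← ENNReal.mul_right_inj hk0 (ENNReal.natCast_ne_top k),
      natCast_mul_measure_stepUpCount_eq hindep hX hτ, mul_sum]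
    exact sum_congr rfl fun i _ ↦ by rw [hc i k hk, mul_assoc]
  calc μ {ω | 1 ≤ stepUpCount τ (X · ω)}
    _ = μ ((fun ω ↦ stepUpCount τ (X · ω)) ⁻¹' Icc 1 (Fintype.card ι)) := by
      congr 1
      ext ω
      simp only [Set.mem_ofPred_eq, Set.mem_preimage, mem_coe, mem_Icc, stepUpCount_le_card,
        and_true]
    _ = ∑ k ∈ Icc 1 (Fintype.card ι), μ {ω | stepUpCount τ (X · ω) = k} :=
      (sum_measure_preimage_singleton_of_aemeasurable (aemeasurable_stepUpCount hX) _).symm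
    _ = ∑ i, c * ∑ k ∈ Icc 1 (Fintype.card ι),
          μ {ω | stepUpCount τ (Function.update (X · ω) i (τ 0)) = k} := by
      rw [sum_congr rfl hfiber, sum_comm]
      simp only [mul_sum]
    _ = Fintype.card ι * c := by
      simp only [sum_measure_stepUpCount_update_eq_one hX hτ, mul_one, sum_const, card_univ,
        nsmul_eq_mul]

theorem measure_setOf_le_of_map_eq_uniform {X : Ω → ℝ}
    (hX : μ.map X = volume.restrict (Set.Icc (0 : ℝ) 1)) {t : ℝ} (ht : t ≤ 1) :
    μ {ω | X ω ≤ t} = ENNReal.ofReal t := by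
  have : NeZero (μ.map X) := ⟨by simp [hX]⟩
  calc μ {ω | X ω ≤ t}
    _ = μ.map X (Set.Iic t) :=
      (Measure.map_apply_of_aemeasurable (aemeasurable_of_map_neZero this) measurableSet_Iic).symm
    _ = volume (Set.Icc 0 t) := by
      rw [hX, Measure.restrict_apply measurableSet_Iic, Set.inter_comm, ← Set.Ici_inter_Iic,
        Set.inter_assoc, Set.Iic_inter_Iic, min_eq_right ht, Set.Ici_inter_Iic]
    _ = ENNReal.ofReal t := by rw [Real.volume_Icc, sub_zero]

theorem measure_setOf_le_mul_div_of_map_eq_uniform {X : Ω → ℝ}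
    (hX : μ.map X = volume.restrict (Set.Icc (0 : ℝ) 1)) {α : ℝ} (hα : α ∈ Set.Icc (0 : ℝ) 1)
    {k m : ℕ} (hm : 0 < m) (hkm : k ≤ m) :
    μ {ω | X ω ≤ α * k / m} = ENNReal.ofReal α * k / m := by
  have hle : α * k / m ≤ 1 := div_le_one_of_le₀
    ((mul_le_of_le_one_left k.cast_nonneg hα.2).trans (Nat.cast_le.2 hkm)) m.cast_nonneg
  rw [measure_setOf_le_of_map_eq_uniform hX hle, ENNReal.ofReal_div_of_pos (Nat.cast_pos.2 hm),
    ENNReal.ofReal_mul hα.1, ENNReal.ofReal_natCast, ENNReal.ofReal_natCast]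

end Probability

theorem simes_exactness_general {Ω : Type*} [MeasurableSpace Ω] {μ : Measure Ω} {m₀ : ℕ}
    (hm₀ : 0 < m₀) {p : Fin m₀ → Ω → ℝ} (hmeas : ∀ i, AEMeasurable (p i) μ)
    (hindep : iIndepFun p μ) {τ : ℕ → ℝ} (hτ : Monotone τ) {α : ℝ≥0∞}
    (hp : ∀ i, ∀ k ∈ Icc 1 m₀, μ {ω | p i ω ≤ τ k} = α * k / m₀) :
    μ {ω | ∃ k ∈ Icc 1 m₀, orderStat (fun i ↦ p i ω) univ k ≤ τ k} = α := by
  have hevent : {ω | ∃ k ∈ Icc 1 m₀, orderStat (fun i ↦ p i ω) univ k ≤ τ k} =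
      {ω | 1 ≤ stepUpCount τ (p · ω)} := by
    ext ω
    simp only [Set.mem_ofPred_eq, one_le_stepUpCount_iff, Fintype.card_fin]
    refine exists_congr fun k ↦ and_congr_right fun hk ↦ ?_
    rw [mem_Icc] at hk
    exact orderStat_le_iff hk.1 (by simpa using hk.2)
  have hp' : ∀ i, ∀ k ∈ Icc 1 (Fintype.card (Fin m₀)),
      μ {ω | p i ω ≤ τ k} = k * (α / m₀) := by
    intro i k hk
    rw [hp i k (by simpa using hk), mul_comm α, mul_div_assoc]
  rw [hevent, measure_one_le_stepUpCount hindep hmeas hτ hp', Fintype.card_fin]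
  exact ENNReal.mul_div_cancel (Nat.cast_ne_zero.2 hm₀.ne') (ENNReal.natCast_ne_top m₀)

/-- Exactness of the Simes (1986) inequality: for `m₀` independent
`Uniform[0,1]` p-values, the Simes event
`{∃ k : p₍ₖ₎ ≤ α k / m₀}` has probability exactly `α`. -/
theorem simes_exactness
    {Ω : Type*} [MeasurableSpace Ω] (μ : Measure Ω) [IsProbabilityMeasure μ]
    (m₀ : ℕ) (hm₀ : 0 < m₀) (p : Fin m₀ → Ω → ℝ)
    (hmeas : ∀ i, Measurable (p i))
    (hindep : ProbabilityTheory.iIndepFun p μ)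
    (hunif : ∀ i, Measure.map (p i) μ = volume.restrict (Set.Icc (0 : ℝ) 1))
    (α : ℝ) (hα : α ∈ Set.Icc (0 : ℝ) 1) :
    μ {ω | ∃ k ∈ Finset.Icc 1 m₀,
        orderStat (fun i => p i ω) Finset.univ k ≤ α * k / m₀}
      = ENNReal.ofReal α := by
  have hτ : Monotone fun k : ℕ ↦ α * k / m₀ :=
    (Nat.mono_cast.const_mul hα.1).div_const m₀.cast_nonneg
  exact simes_exactness_general hm₀ (fun i ↦ (hmeas i).aemeasurable) hindep hτ fun i k hk ↦
    measure_setOf_le_mul_div_of_map_eq_uniform (hunif i) hα hm₀ (mem_Icc.1 hk).2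
end

section
/- Let m be a positive integer, α ∈ (0,1), and p : Fin m → ℝ a vector of p-values. Let H₀ ⊆ Fin m with |H₀| = m₀ ≥ 1, let h(α) = max{ i ∈ {0,…,m} : for all k ∈ {1,…,i}, p_{(m−i+k)} > αk/i } be the Hommel value, and suppose the Simes event holds for the nulls: p_{(k:H₀)} > αk/m₀ for all k ∈ {1,…,m₀} (in particular h(α) ≥ m₀ ≥ 1). Then for the ARI threshold family t_k = αk/h(α) (k ∈ {1,…,m}) and for every nonempty S ⊆ Fin m, |S ∩ H₀| ≤ |S| − max_{k∈{1,…,m}} (1 − k + #{i ∈ S : p_i < αk/h(α)}); that is, the ARI post hoc bound is valid simultaneously over all subsets on the Simes event. -/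
open scoped Classical in
/-- The Hommel (1988) value: the largest `i ∈ {0,…,m}` such that the `i`
largest p-values exceed the scaled Simes line `α k / i` for all `k ≤ i`. -/
noncomputable def hommelValue (m : ℕ) (α : ℝ) (p : Fin m → ℝ) : ℕ :=
  ((Finset.range (m + 1)).filter
    (fun i => ∀ k ∈ Finset.Icc 1 i, α * k / i < orderStat p Finset.univ (m - i + k))).sup id

/-!
The `k`-th smallest of `(p i)_{i ∈ A}` exceeds a level `c` exactly when fewer than `k` elements of
`A` have `p i ≤ c`, so on the Simes event fewer than `k` nulls have `p i ≤ α k / m₀`, for every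
`k ≥ 1`. For any predicate, `S` contains at most `#(S \ H₀)` more elements satisfying it than `H₀`
does. When `S` is the set of all hypotheses, this gives the defining property of the Hommel value
at `m₀`, hence `m₀ ≤ h(α)`. The ARI thresholds `α k / h(α)` therefore lie below the Simes line of
`H₀`, and the same count for an arbitrary `S` is the post hoc bound.
-/

open Finset

theorem getElem_le_iff_lt_countP_of_sortedLE {β : Type*} [Preorder β] [DecidableLE β]
    {l : List β} (hl : l.SortedLE) {k : ℕ} (hk : k < l.length) (c : β) :
    l[k] ≤ c ↔ k < l.countP (· ≤ c) := by
  have countP_eq_card : l.countP (· ≤ c) = #{i | l.get i ≤ c} := by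
    rw [← Multiset.coe_countP, ← List.ofFn_get l, ← Fin.univ_val_map, Multiset.countP_map,
      List.ofFn_get]
    rfl
  rw [countP_eq_card]
  exact (Tuple.lt_card_le_iff_apply_le_of_monotone (j := ⟨k, hk⟩) hl.monotone_get).symm

theorem card_inter_add_card_filter_le {ι : Type*} [DecidableEq ι] (S A : Finset ι)
    (q : ι → Prop) [DecidablePred q] :
    #(S ∩ A) + #{i ∈ S | q i} ≤ #S + #{i ∈ A | q i} := by
  have union_sub : S ∩ A ∪ {i ∈ S | q i} ⊆ S := union_subset inter_subset_left (filter_subset _ _)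
  have inter_sub : (S ∩ A) ∩ {i ∈ S | q i} ⊆ {i ∈ A | q i} := by grind
  rw [← card_union_add_card_inter]
  exact add_le_add (card_le_card union_sub) (card_le_card inter_sub)

theorem lt_orderStat_iff {m : ℕ} {p : Fin m → ℝ} {A : Finset (Fin m)} {k : ℕ} (hk : 1 ≤ k)
    (hkA : k ≤ #A) {c : ℝ} : c < orderStat p A k ↔ #{i ∈ A | p i ≤ c} < k := by
  set l := (A.val.map p).sort (· ≤ ·) with l_def
  have hkl : k - 1 < l.length := by
    rw [Multiset.length_sort, Multiset.card_map, card_val]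
    omega
  have countP_eq : l.countP (· ≤ c) = #{i ∈ A | p i ≤ c} := by
    rw [← Multiset.coe_countP, Multiset.sort_eq, Multiset.countP_map]
    rfl
  rw [orderStat, ← l_def, List.getD_eq_getElem _ _ hkl, ← not_le,
    getElem_le_iff_lt_countP_of_sortedLE (Multiset.pairwise_sort _ _).sortedLE, countP_eq]
  omega

theorem le_hommelValue {m : ℕ} {α : ℝ} {p : Fin m → ℝ} {i : ℕ} (him : i ≤ m)
    (h : ∀ k ∈ Icc 1 i, α * k / i < orderStat p univ (m - i + k)) : i ≤ hommelValue m α p := by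
  refine le_sup (f := id) ?_
  simp only [mem_filter, mem_range]
  exact ⟨Nat.lt_succ_of_le him, h⟩

/-- The Simes event for the hypotheses in `A`: each of their order statistics lies strictly above
the Simes line `k ↦ α k / #A`. Its complement is rejection of `⋂ i ∈ A, Hᵢ` by the Simes test. -/
def SimesEvent {m : ℕ} (α : ℝ) (p : Fin m → ℝ) (A : Finset (Fin m)) : Prop :=
  ∀ k ∈ Icc 1 #A, α * k / #A < orderStat p A k

namespace SimesEvent

variable {m : ℕ} {α : ℝ} {p : Fin m → ℝ} {A : Finset (Fin m)}

theorem card_filter_lt (h : SimesEvent α p A) {k : ℕ} (hk : 1 ≤ k) :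
    #{i ∈ A | p i ≤ α * k / #A} < k := by
  obtain hkA | hAk := le_or_gt k #A
  · exact (lt_orderStat_iff hk hkA).1 (h k (mem_Icc.2 ⟨hk, hkA⟩))
  · exact (card_filter_le _ _).trans_lt hAk

theorem card_filter_lt_of_card_le (h : SimesEvent α p A) (hα : 0 ≤ α) {n k : ℕ} (hn : #A ≤ n)
    (hk : 1 ≤ k) : #{i ∈ A | p i ≤ α * k / n} < k := by
  obtain rfl | hA := A.eq_empty_or_nonempty
  · rwa [filter_empty, card_empty]
  · have : 0 < #A := hA.card_pos
    refine lt_of_le_of_lt (card_le_card ?_) (h.card_filter_lt hk)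
    gcongr

theorem card_le_hommelValue (h : SimesEvent α p A) : #A ≤ hommelValue m α p := by
  have hAm : #A ≤ m := card_finset_fin_le A
  refine le_hommelValue hAm fun k hk ↦ ?_
  obtain ⟨hk, hkA⟩ := mem_Icc.1 hk
  have hcount := card_inter_add_card_filter_le univ A (p · ≤ α * k / #A)
  have hnull := h.card_filter_lt hk
  rw [univ_inter, card_fin] at hcount
  rw [lt_orderStat_iff (by omega) (by rw [card_fin]; omega)]
  omega

theorem card_inter_add_card_filter_lt (h : SimesEvent α p A) (hα : 0 ≤ α) (S : Finset (Fin m))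
    {n k : ℕ} (hn : #A ≤ n) (hk : 1 ≤ k) :
    #(S ∩ A) + #{i ∈ S | p i ≤ α * k / n} < #S + k :=
  (card_inter_add_card_filter_le S A _).trans_lt <|
    Nat.add_lt_add_left (h.card_filter_lt_of_card_le hα hn hk) _

end SimesEvent

theorem ARI_posthoc_bound_on_simes_event_general {m : ℕ} (hm : 0 < m) {α : ℝ} (hα : 0 ≤ α)
    {p : Fin m → ℝ} {H0 : Finset (Fin m)} (hSimes : SimesEvent α p H0) (S : Finset (Fin m)) :
    (#(S ∩ H0) : ℤ) ≤ #S -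
      (Icc 1 m).sup' (nonempty_Icc.mpr hm)
        (fun k ↦ 1 - (k : ℤ) + #{i ∈ S | p i < α * k / hommelValue m α p}) := by
  rw [le_sub_comm]
  refine sup'_le _ _ fun k hk ↦ ?_
  have hbound := hSimes.card_inter_add_card_filter_lt hα S hSimes.card_le_hommelValue
    (mem_Icc.1 hk).1
  have hstrict : #{i ∈ S | p i < α * k / hommelValue m α p} ≤
      #{i ∈ S | p i ≤ α * k / hommelValue m α p} :=
    card_le_card (monotone_filter_right S fun _ _ ↦ le_of_lt)
  omega

/-- Validity of the ARI post hoc bound (Rosenblatt et al., 2018) on the Simes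
event: with the ARI thresholds `t k = α k / h(α)`, for every nonempty subset
`S`, the number of false positives in `S` satisfies
`|S ∩ H₀| ≤ |S| − max_{k ∈ {1,…,m}} (1 − k + #{i ∈ S : pᵢ < α k / h(α)})`. -/
theorem ARI_posthoc_bound_on_simes_event
    (m : ℕ) (hm : 0 < m) (α : ℝ) (hα : α ∈ Set.Ioo (0 : ℝ) 1)
    (p : Fin m → ℝ) (H0 : Finset (Fin m)) (m₀ : ℕ) (hcard : H0.card = m₀) (hm₀ : 1 ≤ m₀)
    (hSimes : ∀ k ∈ Finset.Icc 1 m₀, α * k / m₀ < orderStat p H0 k) :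
    ∀ S : Finset (Fin m), S.Nonempty →
      ((S ∩ H0).card : ℤ) ≤ (S.card : ℤ) -
        (Finset.Icc 1 m).sup' (Finset.nonempty_Icc.mpr hm)
          (fun k => 1 - (k : ℤ) +
            ((S.filter (fun i => p i < α * k / hommelValue m α p)).card : ℤ)) := by
  subst hcard
  exact fun S _ ↦ ARI_posthoc_bound_on_simes_event_general hm hα.1.le hSimes S
end
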